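/- arXiv:2211.09094 — 2 statements merged into one kernel-verified Lean document; each statement's English description precedes it below -/
import Mathlib

section
/- There exists a universal constant C > 0 such that for all integers n ≥ 2, m ≥ 1 and all 1 ≤ s ≤ t ≤ nm, one has 0 ≤ E[max_{1≤i≤n} X_i(t)] − E[max_{1≤i≤n} X_i(s)] ≤ C·((t−s)/√n + 1). -/
open Finset

/-- The maximum entry of a tuple `j : Fin n → Fin (m+1)`, as a natural number. -/
def maxEntry {n m : ℕ} (j : Fin n → Fin (m + 1)) : ℕ :=
  Finset.univ.sup (fun i => (j i : ℕ))

/-- Expected value of `max_i X_i(t)` for the multivariate hypergeometric counts. -/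
noncomputable def expMaxHyper (n m t : ℕ) : ℝ :=
  ∑ j ∈ univ.filter (fun j : Fin n → Fin (m + 1) => ∑ i, (j i : ℕ) = t),
    ((∏ i, (Nat.choose m (j i : ℕ) : ℝ)) / (Nat.choose (n * m) t : ℝ)) * (maxEntry j : ℝ)

/-- The largest number of cards of a single type in the hand `A`; the card `(i, k)` has type `i`. -/
def maxCount {n m : ℕ} (A : Finset (Fin n × Fin m)) : ℕ :=
  univ.sup fun i => #{p ∈ A | p.1 = i}

lemma maxCount_mono {n m : ℕ} {A B : Finset (Fin n × Fin m)} (h : A ⊆ B) :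
    maxCount A ≤ maxCount B :=
  Finset.sup_mono_fun fun _ _ => card_le_card (filter_subset_filter _ h)

lemma maxCount_union_le {n m : ℕ} (A B : Finset (Fin n × Fin m)) :
    maxCount (A ∪ B) ≤ maxCount A + maxCount B := by
  refine Finset.sup_le fun i _ => ?_
  rw [filter_union]
  refine (card_union_le _ _).trans (add_le_add ?_ ?_)
  · exact Finset.le_sup (f := fun i => #{p ∈ A | p.1 = i}) (mem_univ i)
  · exact Finset.le_sup (f := fun i => #{p ∈ B | p.1 = i}) (mem_univ i)

/-- A set of pairs amounts to the family of its rows. -/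
def finsetProdEquiv (α β : Type*) [Fintype α] [Fintype β] [DecidableEq α] [DecidableEq β] :
    Finset (α × β) ≃ (α → Finset β) where
  toFun S i := {k | (i, k) ∈ S}
  invFun F := {p | p.2 ∈ F p.1}
  left_inv S := by ext; simp
  right_inv F := by ext; simp

lemma card_filter_fst_finsetProdEquiv_symm {α β : Type*} [Fintype α] [Fintype β] [DecidableEq α]
    [DecidableEq β] (F : α → Finset β) (i : α) :
    #{p ∈ (finsetProdEquiv α β).symm F | p.1 = i} = #(F i) := by
  symm
  refine card_bij (fun k _ => (i, k)) ?_ ?_ ?_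
  · intro k hk; simpa [finsetProdEquiv] using hk
  · intro a _ b _ h; simpa using h
  · rintro ⟨a, b⟩ h
    simp only [finsetProdEquiv, Equiv.coe_fn_symm_mk, mem_filter, mem_univ, true_and] at h
    obtain ⟨h, rfl⟩ := h
    exact ⟨b, h, rfl⟩

lemma card_finsetProdEquiv_symm {α β : Type*} [Fintype α] [Fintype β] [DecidableEq α]
    [DecidableEq β] (F : α → Finset β) :
    #((finsetProdEquiv α β).symm F) = ∑ i, #(F i) := by
  rw [card_eq_sum_card_fiberwise (f := Prod.fst) (t := univ) (by simp)]
  exact sum_congr rfl fun i _ => card_filter_fst_finsetProdEquiv_symm F i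

/-- The row sizes of a family of subsets of `Fin m`. -/
def rowCard {n m : ℕ} (F : Fin n → Finset (Fin m)) (i : Fin n) : Fin (m + 1) :=
  ⟨#(F i), Nat.lt_succ_of_le (by simpa using card_le_univ (F i))⟩

lemma card_filter_rowCard_eq {n m : ℕ} (j : Fin n → Fin (m + 1)) :
    #{F : Fin n → Finset (Fin m) | rowCard F = j} = ∏ i, m.choose (j i) := by
  have : ({F : Fin n → Finset (Fin m) | rowCard F = j} : Finset _) =
      Fintype.piFinset fun i => powersetCard (j i : ℕ) (univ : Finset (Fin m)) := by
    ext F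
    simp [rowCard, funext_iff, Fin.ext_iff]
  rw [this, Fintype.card_piFinset]
  simp

lemma expMaxHyper_eq_sum_powersetCard (n m t : ℕ) :
    expMaxHyper n m t =
      (∑ A ∈ powersetCard t (univ : Finset (Fin n × Fin m)), (maxCount A : ℝ)) /
        ((n * m).choose t : ℝ) := by
  have key : ∑ A ∈ powersetCard t (univ : Finset (Fin n × Fin m)), (maxCount A : ℝ) =
      ∑ j : Fin n → Fin (m + 1) with ∑ i, (j i : ℕ) = t,
        (∏ i, (m.choose (j i) : ℝ)) * maxEntry j := by
    calc _ = ∑ A : Finset (Fin n × Fin m) with #A = t, (maxCount A : ℝ) := by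
            refine sum_congr ?_ fun _ _ => rfl
            ext; simp
      _ = ∑ F : Fin n → Finset (Fin m) with ∑ i, (rowCard F i : ℕ) = t,
            (maxEntry (rowCard F) : ℝ) := by
            rw [sum_filter, sum_filter, ← (finsetProdEquiv (Fin n) (Fin m)).symm.sum_comp]
            refine sum_congr rfl fun F _ => ?_
            simp [maxCount, maxEntry, rowCard, card_finsetProdEquiv_symm,
              card_filter_fst_finsetProdEquiv_symm]
            rfl
      _ = ∑ j : Fin n → Fin (m + 1) with ∑ i, (j i : ℕ) = t,
            ∑ F with rowCard F = j, (maxEntry (rowCard F) : ℝ) := by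
            rw [sum_filter, sum_filter, ← Finset.sum_fiberwise univ rowCard]
            refine sum_congr rfl fun j _ => ?_
            split_ifs with h
            · refine sum_congr rfl fun F hF => if_pos ?_
              rw [(mem_filter.1 hF).2, h]
            · refine sum_eq_zero fun F hF => if_neg ?_
              rwa [(mem_filter.1 hF).2]
      _ = _ := by
            refine sum_congr rfl fun j _ => ?_
            rw [sum_congr rfl fun F hF => by rw [(mem_filter.1 hF).2], sum_const,
              card_filter_rowCard_eq, nsmul_eq_mul]
            push_cast
            rfl
  rw [key, expMaxHyper, sum_div]
  exact sum_congr rfl fun j _ => by ring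

lemma Finset.exists_perm_map_eq {Ω : Type*} [Fintype Ω] [DecidableEq Ω] {A B : Finset Ω}
    (h : #A = #B) : ∃ τ : Equiv.Perm Ω, A.map τ.toEmbedding = B := by
  let e : {x // x ∈ A} ≃ {x // x ∈ B} := Finset.equivOfCardEq h
  refine ⟨e.extendSubtype, eq_of_subset_of_card_le ?_ (by simp [h])⟩
  intro x hx
  obtain ⟨a, ha, rfl⟩ := mem_map.1 hx
  exact e.extendSubtype_mem a ha

lemma sum_perm_map_eq_of_card_eq {Ω : Type*} [Fintype Ω] [DecidableEq Ω] (f : Finset Ω → ℝ)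
    {A B : Finset Ω} (h : #A = #B) :
    ∑ σ : Equiv.Perm Ω, f (A.map σ.toEmbedding) = ∑ σ : Equiv.Perm Ω, f (B.map σ.toEmbedding) := by
  obtain ⟨τ, rfl⟩ := Finset.exists_perm_map_eq h
  rw [← Equiv.sum_comp (Equiv.mulRight τ)]
  refine sum_congr rfl fun σ _ => ?_
  rw [map_map]
  rfl

/-- Averaging over all `t`-subsets is averaging over the images of one `t`-subset under all
permutations. -/
lemma sum_powersetCard_div_choose {Ω : Type*} [Fintype Ω] [DecidableEq Ω] (f : Finset Ω → ℝ)
    (A : Finset Ω) :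
    (∑ B ∈ powersetCard #A univ, f B) / ((Fintype.card Ω).choose #A : ℝ) =
      (∑ σ : Equiv.Perm Ω, f (A.map σ.toEmbedding)) / ((Fintype.card Ω).factorial : ℝ) := by
  have h1 : ∑ B ∈ powersetCard #A univ, ∑ σ : Equiv.Perm Ω, f (B.map σ.toEmbedding) =
      (Fintype.card Ω).choose #A * ∑ σ : Equiv.Perm Ω, f (A.map σ.toEmbedding) := by
    rw [sum_congr rfl fun B hB => sum_perm_map_eq_of_card_eq f (mem_powersetCard.1 hB).2,
      sum_const, card_powersetCard, nsmul_eq_mul, card_univ]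
  have h2 : ∀ σ : Equiv.Perm Ω, ∑ B ∈ powersetCard #A univ, f (B.map σ.toEmbedding) =
      ∑ B ∈ powersetCard #A univ, f B := fun σ => by
    refine sum_equiv σ.finsetCongr (fun B => ?_) fun B _ => rfl
    simp [Equiv.finsetCongr]
  rw [sum_comm, sum_congr rfl fun σ _ => h2 σ, sum_const, card_univ, Fintype.card_perm,
    nsmul_eq_mul] at h1
  have hc : ((Fintype.card Ω).choose #A : ℝ) ≠ 0 := by
    exact_mod_cast (Nat.choose_pos (card_le_univ A)).ne'
  have hf : ((Fintype.card Ω).factorial : ℝ) ≠ 0 := by positivity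
  field_simp
  linarith

lemma expMaxHyper_card {n m : ℕ} (A : Finset (Fin n × Fin m)) :
    expMaxHyper n m #A =
      (∑ σ : Equiv.Perm (Fin n × Fin m), (maxCount (A.map σ.toEmbedding) : ℝ)) /
        ((n * m).factorial : ℝ) := by
  rw [expMaxHyper_eq_sum_powersetCard]
  simpa using sum_powersetCard_div_choose (fun B : Finset (Fin n × Fin m) => (maxCount B : ℝ)) A

lemma Equiv.Perm.exists_apply_eq_and_apply_eq {Ω : Type*} [DecidableEq Ω] {a b c d : Ω}
    (hab : a ≠ b) (hcd : c ≠ d) : ∃ τ : Equiv.Perm Ω, τ a = c ∧ τ b = d := by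
  have hb : Equiv.swap a c b ≠ c := fun h =>
    hab ((Equiv.swap a c).injective (by rw [h, Equiv.swap_apply_left]))
  refine ⟨(Equiv.swap a c).trans (Equiv.swap (Equiv.swap a c b) d), ?_, by simp⟩
  simp [Equiv.swap_apply_of_ne_of_ne hb.symm hcd]

/-- Ordered pairs of distinct cards in `A` of the same type. -/
def sameTypePairs {n m : ℕ} (A : Finset (Fin n × Fin m)) :
    Finset ((Fin n × Fin m) × (Fin n × Fin m)) :=
  {q ∈ A.offDiag | q.1.1 = q.2.1}

lemma card_sameTypePairs {n m : ℕ} (A : Finset (Fin n × Fin m)) :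
    #(sameTypePairs A) = ∑ i, (#{p ∈ A | p.1 = i} * #{p ∈ A | p.1 = i} - #{p ∈ A | p.1 = i}) := by
  rw [card_eq_sum_card_fiberwise (f := fun q => q.1.1) (t := univ) (by simp)]
  refine sum_congr rfl fun i _ => ?_
  rw [← offDiag_card]
  congr 1
  ext ⟨p, q⟩
  simp only [sameTypePairs, mem_filter, mem_offDiag]
  grind

lemma maxCount_mul_self_sub_le {n m : ℕ} (A : Finset (Fin n × Fin m)) :
    (maxCount A : ℝ) * (maxCount A - 1) ≤ #(sameTypePairs A) := by
  have key : maxCount A * maxCount A - maxCount A ≤ #(sameTypePairs A) := by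
    rcases (univ : Finset (Fin n)).eq_empty_or_nonempty with h | h
    · simp [maxCount, h]
    obtain ⟨i, -, hi⟩ := exists_mem_eq_sup univ h fun i => #{p ∈ A | p.1 = i}
    rw [card_sameTypePairs, maxCount, hi]
    exact single_le_sum (f := fun i => #{p ∈ A | p.1 = i} * #{p ∈ A | p.1 = i} -
      #{p ∈ A | p.1 = i}) (fun _ _ => Nat.zero_le _) (mem_univ i)
  have : ((maxCount A * maxCount A : ℕ) : ℝ) ≤ ((#(sameTypePairs A) + maxCount A : ℕ) : ℝ) :=
    Nat.cast_le.2 (by omega)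
  push_cast at this
  linarith

lemma card_sameTypePairs_univ (n m : ℕ) :
    #(sameTypePairs (univ : Finset (Fin n × Fin m))) = n * (m * m - m) := by
  have h (i : Fin n) : #{p : Fin n × Fin m | p.1 = i} = m := by
    have := card_filter_fst_finsetProdEquiv_symm (fun _ : Fin n => (univ : Finset (Fin m))) i
    simpa [finsetProdEquiv] using this
  simp [card_sameTypePairs, h]

lemma card_sameTypePairs_map {n m : ℕ} (A : Finset (Fin n × Fin m))
    (σ : Equiv.Perm (Fin n × Fin m)) :
    (#(sameTypePairs (A.map σ.toEmbedding)) : ℝ) =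
      ∑ q ∈ A.offDiag, if (σ q.1).1 = (σ q.2).1 then (1 : ℝ) else 0 := by
  rw [sum_boole, Nat.cast_inj]
  symm
  refine card_bij (fun q _ => (σ q.1, σ q.2)) ?_ ?_ ?_
  · rintro ⟨a, b⟩ h
    simpa [sameTypePairs] using h
  · rintro ⟨a, b⟩ _ ⟨c, d⟩ _ h
    simpa using h
  · rintro ⟨a, b⟩ h
    refine ⟨(σ.symm a, σ.symm b), ?_, by simp⟩
    simpa [sameTypePairs, Finset.mem_map_equiv] using h

/-- The number of permutations sending two given distinct cards to cards of the same type. -/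
lemma sum_perm_sameType_mul {n m : ℕ} {a b : Fin n × Fin m} (hab : a ≠ b) :
    ((n * m : ℝ) * (n * m) - n * m) *
        ∑ σ : Equiv.Perm (Fin n × Fin m), (if (σ a).1 = (σ b).1 then (1 : ℝ) else 0) =
      (n * m).factorial * (n * (m * m - m)) := by
  have hinv : ∀ q ∈ (univ : Finset (Fin n × Fin m)).offDiag,
      ∑ σ : Equiv.Perm (Fin n × Fin m), (if (σ q.1).1 = (σ q.2).1 then (1 : ℝ) else 0) =
        ∑ σ : Equiv.Perm (Fin n × Fin m), (if (σ a).1 = (σ b).1 then (1 : ℝ) else 0) := by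
    intro q hq
    obtain ⟨τ, h1, h2⟩ := Equiv.Perm.exists_apply_eq_and_apply_eq hab (mem_offDiag.1 hq).2.2
    rw [← h1, ← h2, ← Equiv.sum_comp (Equiv.mulRight τ) fun σ : Equiv.Perm (Fin n × Fin m) =>
      if (σ a).1 = (σ b).1 then (1 : ℝ) else 0]
    rfl
  have htot : ∑ σ : Equiv.Perm (Fin n × Fin m),
      (#(sameTypePairs ((univ : Finset (Fin n × Fin m)).map σ.toEmbedding)) : ℝ) =
      (n * m).factorial * (n * (m * m - m)) := by
    simp only [map_univ_equiv, card_sameTypePairs_univ, sum_const, card_univ, Fintype.card_perm,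
      Fintype.card_prod, Fintype.card_fin, nsmul_eq_mul]
    rw [Nat.cast_mul, Nat.cast_sub (Nat.le_mul_self m), Nat.cast_mul]
  rw [← htot, sum_congr rfl fun σ _ => card_sameTypePairs_map _ σ, sum_comm, sum_congr rfl hinv,
    sum_const, nsmul_eq_mul, offDiag_card, Nat.cast_sub (Nat.le_mul_self _)]
  simp

lemma sum_perm_sameType_le {n m : ℕ} (hn : 2 ≤ n) (hm : 1 ≤ m) {a b : Fin n × Fin m}
    (hab : a ≠ b) :
    ∑ σ : Equiv.Perm (Fin n × Fin m), (if (σ a).1 = (σ b).1 then (1 : ℝ) else 0) ≤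
      (n * m).factorial / n := by
  have h := sum_perm_sameType_mul hab
  set g := ∑ σ : Equiv.Perm (Fin n × Fin m), (if (σ a).1 = (σ b).1 then (1 : ℝ) else 0)
  have hn' : (2 : ℝ) ≤ n := by exact_mod_cast hn
  have hm' : (1 : ℝ) ≤ m := by exact_mod_cast hm
  have hf : (0 : ℝ) < (n * m).factorial := by positivity
  rw [le_div_iff₀ (by positivity)]
  have hpos : (0 : ℝ) < m * (n * m - 1) := by
    nlinarith [mul_le_mul hn' hm' (by norm_num) (by linarith)]
  have h' : m * (n * m - 1) * (g * n) = m * (n * m - n) * (n * m).factorial := by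
    linear_combination h
  refine le_of_mul_le_mul_left (h'.trans_le ?_) hpos
  gcongr
  linarith

lemma sum_perm_card_sameTypePairs_le {n m : ℕ} (hn : 2 ≤ n) (hm : 1 ≤ m)
    (A : Finset (Fin n × Fin m)) :
    ∑ σ : Equiv.Perm (Fin n × Fin m), (#(sameTypePairs (A.map σ.toEmbedding)) : ℝ) ≤
      (#A : ℝ) ^ 2 * ((n * m).factorial / n) := by
  rw [sum_congr rfl fun σ _ => card_sameTypePairs_map A σ, sum_comm]
  refine (sum_le_card_nsmul _ _ _ fun q hq =>
    sum_perm_sameType_le hn hm (mem_offDiag.1 hq).2.2).trans ?_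
  rw [nsmul_eq_mul]
  gcongr
  rw [offDiag_card, sq]
  exact_mod_cast Nat.sub_le _ _

lemma natCast_le_one_add_add_mul_div (k : ℕ) {l : ℝ} (hl : 0 < l) :
    (k : ℝ) ≤ 1 + l + k * (k - 1) / l := by
  have hk : (0 : ℝ) ≤ (k : ℝ) * (k - 1) := by
    rcases k with _ | k
    · simp
    · push_cast
      rw [add_sub_cancel_right]
      positivity
  rcases le_total (k : ℝ) (1 + l) with h | h
  · have : 0 ≤ (k : ℝ) * (k - 1) / l := by positivity
    linarith
  · have : (k : ℝ) - 1 ≤ k * (k - 1) / l := by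
      rw [le_div_iff₀ hl]
      nlinarith
    linarith

lemma expMaxHyper_card_le {n m : ℕ} (hn : 2 ≤ n) (hm : 1 ≤ m) (A : Finset (Fin n × Fin m)) :
    expMaxHyper n m #A ≤ 1 + 2 * (#A / √n) := by
  rw [expMaxHyper_card]
  have hf : (0 : ℝ) < (n * m).factorial := by positivity
  have hn0 : (0 : ℝ) < n := by positivity
  rcases A.eq_empty_or_nonempty with rfl | hA
  · have h0 : maxCount (∅ : Finset (Fin n × Fin m)) = 0 := by
      simp [maxCount]
    simp [h0]
  have hA' : (0 : ℝ) < #A := by exact_mod_cast hA.card_pos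
  have hl : 0 < (#A : ℝ) / √n := by positivity
  rw [div_le_iff₀ hf]
  calc _ ≤ ∑ σ : Equiv.Perm (Fin n × Fin m),
        (1 + #A / √n + #(sameTypePairs (A.map σ.toEmbedding)) / (#A / √n)) := by
          refine sum_le_sum fun σ _ => (natCast_le_one_add_add_mul_div _ hl).trans ?_
          gcongr
          exact maxCount_mul_self_sub_le _
    _ = (n * m).factorial * (1 + #A / √n) +
          (∑ σ : Equiv.Perm (Fin n × Fin m), (#(sameTypePairs (A.map σ.toEmbedding)) : ℝ)) /
            (#A / √n) := by
          rw [sum_add_distrib, ← sum_div]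
          simp [card_univ, Fintype.card_perm, mul_add]
    _ ≤ (n * m).factorial * (1 + #A / √n) +
          (#A : ℝ) ^ 2 * ((n * m).factorial / n) / (#A / √n) := by
          gcongr
          exact sum_perm_card_sameTypePairs_le hn hm A
    _ = _ := by
          have hs : √(n : ℝ) ^ 2 = n := Real.sq_sqrt hn0.le
          have hs0 : √(n : ℝ) ≠ 0 := by positivity
          nth_rewrite 2 [← hs]
          field_simp
          ring

theorem stmt8 :
    ∃ C > 0, ∀ n m s t : ℕ, 2 ≤ n → 1 ≤ m → 1 ≤ s → s ≤ t → t ≤ n * m →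
      0 ≤ expMaxHyper n m t - expMaxHyper n m s ∧
      expMaxHyper n m t - expMaxHyper n m s ≤ C * (((t : ℝ) - s) / Real.sqrt n + 1) := by
  refine ⟨2, two_pos, fun n m s t hn hm _ hst ht => ?_⟩
  obtain ⟨B, -, rfl⟩ := exists_subset_card_eq (s := (univ : Finset (Fin n × Fin m))) (n := t)
    (by simpa using ht)
  obtain ⟨A, hAB, rfl⟩ := exists_subset_card_eq hst
  have hf : (0 : ℝ) < (n * m).factorial := by positivity
  constructor
  · rw [sub_nonneg, expMaxHyper_card, expMaxHyper_card]
    gcongr with σ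
    exact maxCount_mono (map_subset_map.2 hAB)
  · have hsub : expMaxHyper n m #B ≤ expMaxHyper n m #A + expMaxHyper n m #(B \ A) := by
      rw [expMaxHyper_card, expMaxHyper_card, expMaxHyper_card, ← add_div, ← sum_add_distrib]
      gcongr with σ
      rw [← Nat.cast_add, Nat.cast_le]
      refine (maxCount_mono ?_).trans (maxCount_union_le _ _)
      rw [← map_union, union_sdiff_of_subset hAB]
    have hD := expMaxHyper_card_le hn hm (B \ A)
    rw [card_sdiff_of_subset hAB, Nat.cast_sub hst] at hD
    rw [card_sdiff_of_subset hAB] at hsub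
    linarith
end

section
/- For every ε > 0 there exists a constant C_ε > 0 such that the following holds. Let n, m ≥ 2 be integers and s ∈ (0, 1/e] with s·nm ≥ 1, and suppose √(2 ln n / m)·(ln(nm))^{1+ε} ≤ 1. For each 1 ≤ t ≤ nm let Y_1(t),...,Y_n(t) be i.i.d. Binomial(m, t/(nm)) random variables. Then Σ_{t=1}^{⌊s·nm⌋} E[max_{1≤i≤n} Y_i(t) − t/n]/t ≤ C_ε·√(m·ln n)·(ln(1/s))^{−ε}. -/
open Finset

/-- The probability `P(Y = k)` for `Y ~ Binomial(m, p)`. -/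
noncomputable def binomPMF (m : ℕ) (p : ℝ) (k : ℕ) : ℝ :=
  (Nat.choose m k : ℝ) * p ^ k * (1 - p) ^ (m - k)

/-- Expected value of `max_i Y_i` for `Y_1, …, Y_n` i.i.d. `Binomial(m, p)`. -/
noncomputable def expMaxBinom (n m : ℕ) (p : ℝ) : ℝ :=
  ∑ j : Fin n → Fin (m + 1), (∏ i, binomPMF m p (j i : ℕ)) * (maxEntry j : ℝ)

lemma binomPMF_nonneg {m : ℕ} {p : ℝ} (h0 : 0 ≤ p) (h1 : p ≤ 1) (k : ℕ) :
    0 ≤ binomPMF m p k := by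
  have : 0 ≤ 1 - p := by linarith
  unfold binomPMF
  positivity

lemma sum_binomPMF_mul_pow (m : ℕ) (p x : ℝ) :
    ∑ k : Fin (m + 1), binomPMF m p k * x ^ (k : ℕ) = (1 - p + p * x) ^ m := by
  rw [Fin.sum_univ_eq_sum_range (fun k => binomPMF m p k * x ^ k), add_comm (1 - p), add_pow]
  refine Finset.sum_congr rfl fun k _ => ?_
  rw [binomPMF, mul_pow]
  ring

lemma sum_binomPMF (m : ℕ) (p : ℝ) : ∑ k : Fin (m + 1), binomPMF m p k = 1 := by
  simpa using sum_binomPMF_mul_pow m p 1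

lemma sum_prod_binomPMF (n m : ℕ) (p : ℝ) :
    ∑ j : Fin n → Fin (m + 1), ∏ i, binomPMF m p (j i : ℕ) = 1 := by
  rw [← Fintype.prod_sum (fun (_ : Fin n) (k : Fin (m + 1)) => binomPMF m p k)]
  simp [sum_binomPMF]

lemma sum_prod_binomPMF_mul_pow (n m : ℕ) (p x : ℝ) (a : Fin n) :
    ∑ j : Fin n → Fin (m + 1), (∏ i, binomPMF m p (j i : ℕ)) * x ^ (j a : ℕ) =
      (1 - p + p * x) ^ m := by
  have h := Fintype.prod_sum (fun (i : Fin n) (k : Fin (m + 1)) =>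
    binomPMF m p k * (if i = a then x ^ (k : ℕ) else 1))
  simp only [Finset.prod_mul_distrib, Finset.prod_ite_eq', Finset.mem_univ, if_true] at h
  rw [← h, Finset.prod_eq_single a]
  · simp [sum_binomPMF_mul_pow]
  · intro b _ hb
    simp [hb, sum_binomPMF]
  · simp

lemma exp_mul_maxEntry_le {n m : ℕ} (hn : 0 < n) (l : ℝ) (j : Fin n → Fin (m + 1)) :
    Real.exp (l * maxEntry j) ≤ ∑ i, Real.exp l ^ (j i : ℕ) := by
  have : Nonempty (Fin n) := ⟨⟨0, hn⟩⟩
  obtain ⟨a, -, ha⟩ := Finset.exists_mem_eq_sup Finset.univ Finset.univ_nonempty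
    (fun i => (j i : ℕ))
  rw [maxEntry, ha, mul_comm, Real.exp_nat_mul]
  exact Finset.single_le_sum (f := fun i => Real.exp l ^ (j i : ℕ))
    (fun i _ => by positivity) (Finset.mem_univ a)

/-- The exponential moment bound on the expected maximum of binomial variables. -/
lemma mul_expMaxBinom_le {n m : ℕ} (hn : 0 < n) {p : ℝ} (h0 : 0 ≤ p) (h1 : p ≤ 1) (l : ℝ) :
    l * expMaxBinom n m p ≤ Real.log n + m * p * (Real.exp l - 1) := by
  set a := Real.log n + m * p * (Real.exp l - 1) with ha
  have hn' : (0 : ℝ) < n := by exact_mod_cast hn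
  have hmgf : ∑ j : Fin n → Fin (m + 1),
      (∏ i, binomPMF m p (j i : ℕ)) * Real.exp (l * maxEntry j) ≤ Real.exp a := by
    calc
      _ ≤ ∑ j : Fin n → Fin (m + 1),
          (∏ i, binomPMF m p (j i : ℕ)) * ∑ b, Real.exp l ^ (j b : ℕ) := by
        gcongr with j
        · exact Finset.prod_nonneg fun i _ => binomPMF_nonneg h0 h1 _
        · exact exp_mul_maxEntry_le hn l j
      _ = n * (1 - p + p * Real.exp l) ^ m := by
        simp only [Finset.mul_sum]
        rw [Finset.sum_comm]
        simp [sum_prod_binomPMF_mul_pow]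
      _ ≤ n * Real.exp (p * (Real.exp l - 1)) ^ m := by
        have : 0 ≤ 1 - p + p * Real.exp l := by
          have : 0 ≤ 1 - p := by linarith
          positivity
        gcongr
        linarith [Real.add_one_le_exp (p * (Real.exp l - 1))]
      _ = Real.exp a := by
        rw [ha, Real.exp_add, Real.exp_log hn', ← Real.exp_nat_mul, mul_assoc]
  have htangent : l * expMaxBinom n m p ≤ ∑ j : Fin n → Fin (m + 1),
      (∏ i, binomPMF m p (j i : ℕ)) *
        (Real.exp (l * maxEntry j) * Real.exp (-a) + (a - 1)) := by
    rw [expMaxBinom, Finset.mul_sum]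
    refine Finset.sum_le_sum fun j _ => ?_
    have h := Real.add_one_le_exp (l * maxEntry j + -a)
    rw [Real.exp_add] at h
    have hw : 0 ≤ ∏ i, binomPMF m p (j i : ℕ) :=
      Finset.prod_nonneg fun i _ => binomPMF_nonneg h0 h1 _
    nlinarith [mul_le_mul_of_nonneg_left h hw]
  simp only [mul_add, ← mul_assoc, Finset.sum_add_distrib, ← Finset.sum_mul,
    sum_prod_binomPMF] at htangent
  have h := mul_le_mul_of_nonneg_right hmgf (Real.exp_pos (-a)).le
  rw [← Real.exp_add, add_neg_cancel, Real.exp_zero] at h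
  linarith

lemma sub_le_of_forall_mul_le {L u f : ℝ} (hL : 0 < L) (hu : 0 < u)
    (h : ∀ l : ℝ, l * f ≤ L + u * (Real.exp l - 1)) :
    f - u ≤ 2 * (√L * √u) + 2 * L := by
  have hexp : ∀ l : ℝ, 0 < l → l ≤ 1 → l * f ≤ L + u * (l + l ^ 2) := fun l hl hl1 => by
    have h1 := (abs_le.1 (Real.abs_exp_sub_one_sub_id_le (abs_le.2 ⟨by linarith, hl1⟩))).2
    refine (h l).trans ?_
    gcongr
    linarith
  have ha : 0 < √L := Real.sqrt_pos.2 hL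
  have hb : 0 < √u := Real.sqrt_pos.2 hu
  rcases le_total u L with huL | huL
  · have := hexp 1 one_pos le_rfl
    have : 0 < √L * √u := by positivity
    linarith
  · have h2 := hexp (√L / √u) (by positivity)
      ((div_le_one hb).2 (Real.sqrt_le_sqrt huL))
    have hLa : L = √L ^ 2 := (Real.sq_sqrt hL.le).symm
    have hub : u = √u ^ 2 := (Real.sq_sqrt hu.le).symm
    generalize √L = a at *
    generalize √u = b at *
    subst hLa hub
    have h3 : a / b * f ≤ a / b * (2 * (a * b) + b ^ 2) := by
      refine h2.trans_eq ?_
      field_simp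
      ring
    have h4 := le_of_mul_le_mul_left h3 (by positivity)
    nlinarith [sq_nonneg a]

lemma sum_Icc_inv_sqrt_le (N : ℕ) : ∑ t ∈ Finset.Icc 1 N, 1 / √(t : ℝ) ≤ 2 * √(N : ℝ) := by
  induction N with
  | zero => simp
  | succ k ih =>
    rw [Finset.sum_Icc_succ_top (by omega)]
    have hb : 0 < √((k + 1 : ℕ) : ℝ) := Real.sqrt_pos.2 (by positivity)
    have h1 : √((k + 1 : ℕ) : ℝ) ^ 2 = k + 1 := by
      rw [Real.sq_sqrt (by positivity)]; push_cast; ring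
    have h2 : √(k : ℝ) ^ 2 = k := Real.sq_sqrt (by positivity)
    have : 1 / √((k + 1 : ℕ) : ℝ) ≤ 2 * √((k + 1 : ℕ) : ℝ) - 2 * √(k : ℝ) := by
      rw [div_le_iff₀ hb]
      nlinarith [sq_nonneg (√((k + 1 : ℕ) : ℝ) - √(k : ℝ))]
    linarith

lemma sum_Icc_inv_le (N : ℕ) : ∑ t ∈ Finset.Icc 1 N, 1 / (t : ℝ) ≤ 1 + Real.log N := by
  have h := harmonic_le_one_add_log N
  rw [harmonic_eq_sum_Icc] at h
  push_cast at h
  simpa using h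

lemma sqrt_le_mul_log_rpow_neg {ε s : ℝ} (hε : 0 < ε) (hs : 0 < s)
    (hlog : 0 < Real.log (1 / s)) :
    √s ≤ (2 * ε) ^ ε * Real.log (1 / s) ^ (-ε) := by
  set u := Real.log (1 / s)
  have hsu : √s = Real.exp (-(u / 2)) := by
    rw [← Real.log_sqrt (by positivity : (0 : ℝ) ≤ 1 / s), Real.exp_neg,
      Real.exp_log (by positivity)]
    simp
  have h1 : u ≤ 2 * ε * Real.exp (u / (2 * ε)) := by
    have := Real.add_one_le_exp (u / (2 * ε))
    calc u = 2 * ε * (u / (2 * ε)) := by field_simp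
      _ ≤ _ := by gcongr; linarith
  have h2 : u ^ ε ≤ (2 * ε) ^ ε * Real.exp (u / 2) := by
    refine (Real.rpow_le_rpow hlog.le h1 hε.le).trans_eq ?_
    rw [Real.mul_rpow (by positivity) (by positivity), ← Real.exp_mul]
    congr 2
    field_simp
  rw [hsu, Real.exp_neg, Real.rpow_neg hlog.le, ← div_eq_mul_inv, inv_eq_one_div,
    div_le_div_iff₀ (by positivity) (by positivity), one_mul]
  exact h2

/-- The lower tail sum `Σ_{t=1}^{⌊snm⌋} E[max_i Y_i(t) - t/n]/t` with
`Y_1(t), …, Y_n(t)` i.i.d. `Binomial(m, t/(nm))` (so that `E[Y_i(t)] = t/n`). -/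
theorem stmt14 (ε : ℝ) (hε : 0 < ε) :
    ∃ C > 0, ∀ (n m : ℕ) (s : ℝ), 2 ≤ n → 2 ≤ m →
      0 < s → s ≤ 1 / Real.exp 1 → 1 ≤ s * ((n : ℝ) * m) →
      Real.sqrt (2 * Real.log n / m) * (Real.log ((n : ℝ) * m)) ^ ((1 : ℝ) + ε) ≤ 1 →
      ∑ t ∈ Finset.Icc 1 ⌊s * ((n : ℝ) * m)⌋₊,
          (expMaxBinom n m ((t : ℝ) / (n * m)) - (t : ℝ) / n) / t ≤
        C * Real.sqrt (m * Real.log n) * (Real.log (1 / s)) ^ (-ε) := by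
  refine ⟨4 * (2 * ε) ^ ε + 2, by positivity, fun n m s hn hm hs hse hsnm hsmall => ?_⟩
  have hn0 : (0 : ℝ) < n := by positivity
  have hm0 : (0 : ℝ) < m := by positivity
  have hL : 0 < Real.log n := Real.log_pos (by exact_mod_cast hn)
  set L := Real.log n
  set N := ⌊s * ((n : ℝ) * m)⌋₊
  have hNle : (N : ℝ) ≤ s * (n * m) := Nat.floor_le (by positivity)
  have hN1 : 1 ≤ N := Nat.le_floor (by simpa using hsnm)
  have hlogs : Real.log s ≤ -1 := by
    have := Real.log_le_log hs hse
    simpa using this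
  have hs1 : s ≤ 1 := hse.trans (by
    rw [div_le_one (Real.exp_pos 1)]; linarith [Real.add_one_le_exp (1 : ℝ)])
  have hu : Real.log (1 / s) = -Real.log s := by simp
  have hupos : 0 < Real.log (1 / s) := by rw [hu]; linarith
  have hlogsnm : 0 ≤ Real.log s + Real.log ((n : ℝ) * m) := by
    rw [← Real.log_mul hs.ne' (by positivity)]
    exact Real.log_nonneg hsnm
  set Q := Real.log ((n : ℝ) * m)
  have hQu : Real.log (1 / s) ≤ Q := by rw [hu]; linarith
  have hQpos : 0 < Q := hupos.trans_le hQu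
  have hterm : ∀ t ∈ Finset.Icc 1 N,
      (expMaxBinom n m ((t : ℝ) / (n * m)) - (t : ℝ) / n) / t ≤
        2 * (√L / √n) * (1 / √(t : ℝ)) + 2 * L * (1 / (t : ℝ)) := by
    intro t ht
    rw [Finset.mem_Icc] at ht
    have ht0 : (0 : ℝ) < t := by exact_mod_cast ht.1
    have htN : (t : ℝ) ≤ N := by exact_mod_cast ht.2
    have hp1 : (t : ℝ) / (n * m) ≤ 1 := by
      rw [div_le_one (by positivity)]
      nlinarith [mul_pos hn0 hm0]
    have hmp : (m : ℝ) * ((t : ℝ) / (n * m)) = t / n := by field_simp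
    have h := sub_le_of_forall_mul_le (u := (t : ℝ) / n) hL (by positivity) (fun l => by
      simpa [hmp] using mul_expMaxBinom_le (n := n) (m := m) (by omega)
        (by positivity : (0 : ℝ) ≤ (t : ℝ) / (n * m)) hp1 l)
    rw [div_le_iff₀ ht0]
    refine h.trans_eq ?_
    rw [Real.sqrt_div ht0.le]
    have hsq : (t : ℝ) = √(t : ℝ) ^ 2 := (Real.sq_sqrt ht0.le).symm
    have hst : 0 < √(t : ℝ) := Real.sqrt_pos.2 ht0
    have hsn : 0 < √(n : ℝ) := Real.sqrt_pos.2 hn0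
    field_simp
    linear_combination (-√L) * hsq
  have hsqrtN : √(N : ℝ) ≤ √s * (√n * √m) := by
    rw [← Real.sqrt_mul hn0.le, ← Real.sqrt_mul hs.le]
    exact Real.sqrt_le_sqrt hNle
  have hlogN : 1 + Real.log N ≤ Q := by
    have := Real.log_le_log (by exact_mod_cast hN1) hNle
    rw [Real.log_mul hs.ne' (by positivity)] at this
    linarith
  have hsqL : √L * √L = L := Real.mul_self_sqrt hL.le
  have hsm : 0 < √(m : ℝ) := Real.sqrt_pos.2 hm0
  have hsn : 0 < √(n : ℝ) := Real.sqrt_pos.2 hn0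
  have hsL : 0 < √L := Real.sqrt_pos.2 hL
  have hbulk : √L ≤ √(m : ℝ) * Q ^ (-(1 + ε)) := by
    have h1 : √L / √m ≤ √(2 * L / m) := by
      rw [← Real.sqrt_div hL.le]
      apply Real.sqrt_le_sqrt
      gcongr
      linarith
    have h2 : √L / √m * Q ^ (1 + ε) ≤ 1 :=
      (mul_le_mul_of_nonneg_right h1 (by positivity)).trans hsmall
    rw [Real.rpow_neg hQpos.le, ← div_eq_mul_inv, le_div_iff₀ (by positivity)]
    rwa [div_mul_eq_mul_div, div_le_one hsm] at h2
  have hLQ : L * Q ≤ √m * √L * Real.log (1 / s) ^ (-ε) := by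
    calc L * Q = √L * (√L * Q) := by rw [← mul_assoc, hsqL]
      _ ≤ √L * (√(m : ℝ) * Q ^ (-(1 + ε)) * Q) := by gcongr
      _ = √m * √L * Q ^ (-ε) := by
        have : Q ^ (-ε) = Q ^ (-(1 + ε)) * Q := by
          rw [← Real.rpow_add_one hQpos.ne']; congr 1; ring
        rw [this]; ring
      _ ≤ _ := by
        have := Real.rpow_le_rpow_of_nonpos hupos hQu (neg_nonpos.2 hε.le)
        gcongr
  calc _ ≤ ∑ t ∈ Finset.Icc 1 N,
        (2 * (√L / √n) * (1 / √(t : ℝ)) + 2 * L * (1 / (t : ℝ))) := Finset.sum_le_sum hterm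
    _ = 2 * (√L / √n) * ∑ t ∈ Finset.Icc 1 N, 1 / √(t : ℝ) +
        2 * L * ∑ t ∈ Finset.Icc 1 N, 1 / (t : ℝ) := by
      rw [Finset.sum_add_distrib, Finset.mul_sum, Finset.mul_sum]
    _ ≤ 2 * (√L / √n) * (2 * (√s * (√n * √m))) + 2 * L * Q := by
      gcongr
      · exact (sum_Icc_inv_sqrt_le N).trans (by gcongr)
      · exact (sum_Icc_inv_le N).trans hlogN
    _ = 4 * (√m * √L) * √s + 2 * (L * Q) := by field_simp; ring
    _ ≤ 4 * (√m * √L) * ((2 * ε) ^ ε * Real.log (1 / s) ^ (-ε)) +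
        2 * (√m * √L * Real.log (1 / s) ^ (-ε)) := by
      gcongr
      exact sqrt_le_mul_log_rpow_neg hε hs hupos
    _ = _ := by rw [Real.sqrt_mul hm0.le]; ring
end
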